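/- Suppose f(0) ≠ 0. For each proper cluster s ∈ Σ_f let λ_s = min_{r∈s} v(r). Then f is NP-regular if and only if every proper cluster s ∈ Σ_f with |s| > |λ_s|_p satisfies d_s = λ_s. -/

import Mathlib

open Polynomial
open scoped Classical

namespace ClusterPicture

variable {K Kbar : Type*} [Field K] [Field Kbar] [Algebra K Kbar]

lemma zero_lt_top' : (0 : WithTop ℚ) < ⊤ := by
  simp

lemma withTop_add_pos {a b : WithTop ℚ} (ha : 0 ≤ a) (hb : 0 < b) : 0 < a + b := by
  rcases eq_or_ne a ⊤ with h | h
  · subst h; rw [top_add]; exact zero_lt_top'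
  · lift a to ℚ using h
    rcases eq_or_ne b ⊤ with h' | h'
    · subst h'; rw [add_top]; exact zero_lt_top'
    · lift b to ℚ using h'
      have ha' : (0 : ℚ) ≤ a := by exact_mod_cast ha
      have hb' : (0 : ℚ) < b := by exact_mod_cast hb
      exact_mod_cast add_pos_of_nonneg_of_pos ha' hb'

/-- The setting of the paper: `K` is a complete discretely valued field, with valuation `v`
normalised so that `v(K^×) = ℤ`, `Kbar` is an algebraic closure of `K`, and `v` is (the unique)
extension of the valuation to a `ℚ ∪ {∞}`-valued valuation on `Kbar`. -/
structure Setup (K Kbar : Type*) [Field K] [Field Kbar] [Algebra K Kbar] : Type _ where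
  /-- the valuation on the algebraic closure -/
  v : Kbar → WithTop ℚ
  v_top_iff : ∀ x : Kbar, v x = ⊤ ↔ x = 0
  v_one : v 1 = 0
  v_neg : ∀ x : Kbar, v (-x) = v x
  v_mul : ∀ x y : Kbar, v (x * y) = v x + v y
  v_add : ∀ x y : Kbar, min (v x) (v y) ≤ v (x + y)
  /-- the valuation is normalised: nonzero elements of `K` have integer valuation -/
  v_base_int : ∀ x : K, x ≠ 0 → ∃ n : ℤ, v (algebraMap K Kbar x) = ((n : ℚ) : WithTop ℚ)
  /-- the valuation is surjective onto `ℤ` on `K^×`: there is a uniformiser -/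
  exists_uniformiser : ∃ π : K, v (algebraMap K Kbar π) = ((1 : ℚ) : WithTop ℚ)
  /-- `Kbar` is an algebraic closure of `K` -/
  algClosed : IsAlgClosed Kbar
  algebraic : Algebra.IsAlgebraic K Kbar
  /-- `K` is complete with respect to the valuation -/
  complete : ∀ a : ℕ → K,
    (∀ q : ℚ, ∃ N : ℕ, ∀ m, N ≤ m → ∀ n, N ≤ n →
      ((q : ℚ) : WithTop ℚ) ≤ v (algebraMap K Kbar (a m - a n))) →
    ∃ b : K, ∀ q : ℚ, ∃ N : ℕ, ∀ n, N ≤ n →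
      ((q : ℚ) : WithTop ℚ) ≤ v (algebraMap K Kbar (a n - b))

/-- Valuation of an element of the base field `K`. -/
def Setup.vK (S : Setup K Kbar) (x : K) : WithTop ℚ := S.v (algebraMap K Kbar x)

/-- The finite set of roots of `f` in the algebraic closure `Kbar`. -/
noncomputable def rootFinset (f : K[X]) : Finset Kbar :=
  (f.map (algebraMap K Kbar)).roots.toFinset

/-- A cluster for `f`: a nonempty subset of the set of roots of `f` cut out by a `v`-adic disc. -/
def IsCluster (S : Setup K Kbar) (f : K[X]) (s : Finset Kbar) : Prop :=
  s.Nonempty ∧ ∃ (z : Kbar) (δ : ℚ),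
    s = (rootFinset f).filter fun r => ((δ : ℚ) : WithTop ℚ) ≤ S.v (r - z)

/-- The depth `d_s = min_{r,r' ∈ s} v (r - r')` of a cluster. -/
noncomputable def depth (S : Setup K Kbar) (s : Finset Kbar) : WithTop ℚ :=
  s.inf fun r => s.inf fun r' => S.v (r - r')

/-- `min_{r ∈ s} v (r - z)`, for `z ∈ Kbar`. -/
noncomputable def dmin (S : Setup K Kbar) (s : Finset Kbar) (z : Kbar) : WithTop ℚ :=
  s.inf fun r => S.v (r - z)

/-- `min_{r ∈ s} v (r - w)`, for `w ∈ K`. -/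
noncomputable def dminK (S : Setup K Kbar) (s : Finset Kbar) (w : K) : WithTop ℚ :=
  dmin S s (algebraMap K Kbar w)

/-- `w ∈ K` is a rational centre of `s` if it maximises `min_{r ∈ s} v (r - w)`.
For a proper cluster `s` with rational centre `w`, the radius `ρ_s` is `dminK S s w`. -/
def IsRationalCentre (S : Setup K Kbar) (s : Finset Kbar) (w : K) : Prop :=
  ∀ w' : K, dminK S s w' ≤ dminK S s w

/-- A rational cluster: a cluster cut out by a disc with centre in `K`. -/
def IsRationalCluster (S : Setup K Kbar) (f : K[X]) (s : Finset Kbar) : Prop :=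
  s.Nonempty ∧ ∃ (w : K) (δ : ℚ),
    s = (rootFinset f).filter fun r => ((δ : ℚ) : WithTop ℚ) ≤ S.v (r - algebraMap K Kbar w)

/-- A cluster centred at `w ∈ K`. -/
def IsClusterCentredAt (S : Setup K Kbar) (f : K[X]) (w : K) (s : Finset Kbar) : Prop :=
  s.Nonempty ∧ ∃ δ : ℚ,
    s = (rootFinset f).filter fun r => ((δ : ℚ) : WithTop ℚ) ≤ S.v (r - algebraMap K Kbar w)

/-- The cluster picture of `f` is almost rational: every proper cluster `s` with
`|s| > |ρ_s|_p` satisfies `d_s = ρ_s`. -/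
def AlmostRational (S : Setup K Kbar) (f : K[X]) (p : ℕ) : Prop :=
  ∀ s : Finset Kbar, IsCluster S f s → 1 < s.card →
    ∀ (w : K) (ρ : ℚ), IsRationalCentre S s w → dminK S s w = ((ρ : ℚ) : WithTop ℚ) →
      padicNorm p ρ < (s.card : ℚ) → depth S s = ((ρ : ℚ) : WithTop ℚ)

/-- The slope of the `j`-th edge of the polygon with vertices `(i_j, c_j)`. -/
def NPslope {s : ℕ} (i : Fin (s + 1) → ℕ) (c : Fin (s + 1) → ℚ) (j : Fin s) : ℚ :=
  (c j.succ - c j.castSucc) / ((i j.succ : ℚ) - (i j.castSucc : ℚ))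

/-- `(i_0, c_0), …, (i_s, c_s)` are the vertices of the Newton polygon of `f`:
the points `(i_j, c_j)` are among the points `(m, v(a_m))`, the first and last vertices lie
above the trailing and leading coefficients, the slopes of consecutive edges strictly
increase, and every point `(m, v(a_m))` lies on or above (the line spanned by) every edge. -/
structure IsNPVertices (S : Setup K Kbar) (f : K[X]) (s : ℕ)
    (i : Fin (s + 1) → ℕ) (c : Fin (s + 1) → ℚ) : Prop where
  mono : StrictMono i
  first : i 0 = f.natTrailingDegree
  last : i (Fin.last s) = f.natDegree
  vert : ∀ j, S.vK (f.coeff (i j)) = ((c j : ℚ) : WithTop ℚ)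
  slope_mono : StrictMono (NPslope i c)
  support : ∀ (j : Fin s) (m : ℕ) (q : ℚ), S.vK (f.coeff m) = ((q : ℚ) : WithTop ℚ) →
    (c j.succ - c j.castSucc) * ((m : ℚ) - (i j.castSucc : ℚ)) ≤
      (q - c j.castSucc) * ((i j.succ : ℚ) - (i j.castSucc : ℚ))

/-- The valuation ring of `Kbar`. -/
def intRing (S : Setup K Kbar) : Subring Kbar where
  carrier := {x : Kbar | (0 : WithTop ℚ) ≤ S.v x}
  zero_mem' := by
    simp only [Set.mem_setOf_eq, (S.v_top_iff 0).mpr rfl]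
    exact le_top
  one_mem' := by
    simp only [Set.mem_setOf_eq, S.v_one]
    exact le_refl _
  add_mem' := by
    intro a b ha hb
    exact le_trans (le_min ha hb) (S.v_add a b)
  mul_mem' := by
    intro a b ha hb
    simp only [Set.mem_setOf_eq, S.v_mul a b]
    exact add_nonneg ha hb
  neg_mem' := by
    intro a ha
    simpa only [Set.mem_setOf_eq, S.v_neg] using ha

lemma mem_intRing {S : Setup K Kbar} {x : Kbar} :
    x ∈ intRing S ↔ (0 : WithTop ℚ) ≤ S.v x := Iff.rfl

/-- The maximal ideal of the valuation ring of `Kbar`. -/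
def maxIdeal (S : Setup K Kbar) : Ideal (intRing S) where
  carrier := {x : intRing S | (0 : WithTop ℚ) < S.v (x : Kbar)}
  zero_mem' := by
    show (0 : WithTop ℚ) < S.v ((0 : intRing S) : Kbar)
    rw [show ((0 : intRing S) : Kbar) = 0 from rfl, (S.v_top_iff 0).mpr rfl]
    exact zero_lt_top'
  add_mem' := by
    intro a b ha hb
    show (0 : WithTop ℚ) < S.v ((a : Kbar) + (b : Kbar))
    exact lt_of_lt_of_le (lt_min ha hb) (S.v_add _ _)
  smul_mem' := by
    intro c x hx
    show (0 : WithTop ℚ) < S.v ((c : Kbar) * (x : Kbar))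
    rw [S.v_mul]
    exact withTop_add_pos c.2 hx

/-- The residue field of `Kbar`; it is an algebraic closure of the residue field `k` of `K`. -/
abbrev Residue (S : Setup K Kbar) : Type _ := intRing S ⧸ maxIdeal S

/-- Reduction to the residue field (with junk value `0` on non-integral elements). -/
noncomputable def red (S : Setup K Kbar) (x : Kbar) : Residue S :=
  if h : (0 : WithTop ℚ) ≤ S.v x then Ideal.Quotient.mk (maxIdeal S) ⟨x, mem_intRing.mpr h⟩
  else 0

/-- The reduction `f̄|_L` of `f` along the edge `L` of its Newton polygon with endpoints
`(i₁, q₁)` and `(i₂, q₂)`, of slope `ρ = nρ / n` where `n` is the denominator of `ρ`;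
`π` is a uniformiser of `K`.  This is the reduction of `π^{-q₁}·(f|_L)(π^{-nρ}·x)`, where
`f|_L (x) = ∑_j a_{n j + i₁} x^j`. -/
noncomputable def redEdge (S : Setup K Kbar) (π : K) (f : K[X])
    (i₁ i₂ : ℕ) (q₁ nρ : ℤ) (n : ℕ) : Polynomial (Residue S) :=
  ∑ j ∈ Finset.range ((i₂ - i₁) / n + 1),
    Polynomial.C (red S (algebraMap K Kbar (f.coeff (n * j + i₁)) *
      (algebraMap K Kbar π) ^ (-(q₁ + (j : ℤ) * nρ)))) * Polynomial.X ^ j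

/-- `f` is NP-regular (`Δ_v`-regular in dimension 1): for every edge `L` of its Newton
polygon, the reduction `f̄|_L` has no multiple roots in the algebraic closure of the residue
field, i.e. is separable. -/
def NPRegular (S : Setup K Kbar) (π : K) (f : K[X]) : Prop :=
  ∀ (s : ℕ) (i : Fin (s + 1) → ℕ) (c : Fin (s + 1) → ℚ),
    IsNPVertices S f s i c →
    ∀ (j : Fin s) (q₁ nρ : ℤ) (n : ℕ),
      (q₁ : ℚ) = c j.castSucc →
      n = (NPslope i c j).den →
      (nρ : ℚ) = (n : ℚ) * NPslope i c j →
      (redEdge S π f (i j.castSucc) (i j.succ) q₁ nρ n).Separable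

/-- The vertex-index function of the Newton polygon of `f(x+w)`, in terms of the sizes of
the clusters `s_1 ⊂ … ⊂ s_{n+1}` centred at `w`; here `t` is the prescribed first index. -/
def vertIdx {n : ℕ} (t : ℕ) (s : Fin (n + 1) → Finset Kbar) : Fin (n + 2) → ℕ :=
  fun j => Fin.cases (motive := fun _ => ℕ) t (fun j' => (s j').card) j

/-- The vertex-value function of the Newton polygon of `f(x+w)`: the vertex over `|s_j|` has
second coordinate `ε_{s_j} - |s_j|·ρ_{s_j}`; `c0` is the prescribed value at the first vertex. -/
def vertVal {n : ℕ} (c0 : ℚ) (s : Fin (n + 1) → Finset Kbar) (ρ ε : Fin (n + 1) → ℚ) :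
    Fin (n + 2) → ℚ :=
  fun j => Fin.cases (motive := fun _ => ℚ) c0 (fun j' => ε j' - ((s j').card : ℚ) * ρ j') j

/-! Let `λ ∈ ℚ` and choose `θ` with `v θ = λ`. Substituting `x ↦ θ x` in `f`, scaling and reducing
gives `X ^ a * ∏ (X - red (r / θ))`, the product being over the roots `r` of `f` with `v r = λ`; its
nonzero coefficients locate the edge `L` of slope `-λ` of the Newton polygon. If `θ ^ n` is a power
of the uniformiser, where `n` is the denominator of `λ`, the product is a constant multiple of
`f̄|_L (X ^ n)`. Write `n = p ^ e * m` with `p ∤ m`. As all roots of `X ^ n - t`, `t ≠ 0`, have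
multiplicity `p ^ e`, `f̄|_L` is separable iff each residue class of the `r / θ` contains at most
`p ^ e` roots. Finally, a residue class with at least two roots is a cluster `s` with `λ_s = λ` and
`d_s > λ`, every cluster `s` with `d_s > λ_s = λ` is contained in such a class, and for `N > 1` one
has `N > p ^ e` iff `N > |λ|_p`. -/

section Expand

variable {F : Type*} [Field F]

theorem isCoprime_expand_iff {n : ℕ} (hn : 0 < n) {f g : F[X]} :
    IsCoprime (expand F n f) (expand F n g) ↔ IsCoprime f g := by
  have := isLocalHom_expand F hn
  refine ⟨fun h => ?_, fun h => h.map (expand F n : F[X] →+* F[X])⟩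
  exact isRelPrime_iff_isCoprime.mp (IsRelPrime.of_map (expand F n) h.isRelPrime)

theorem separable_expand_iff {n : ℕ} (hn : (n : F) ≠ 0) {h : F[X]} (h0 : h.coeff 0 ≠ 0) :
    (expand F n h).Separable ↔ h.Separable := by
  have hn0 : 0 < n := Nat.pos_of_ne_zero (by rintro rfl; simp at hn)
  have hX : IsCoprime (expand F n h) X := by
    rw [isCoprime_comm, (irreducible_X.coprime_iff_not_dvd), X_dvd_iff, coeff_expand hn0]
    simpa using h0
  have hC : IsUnit (n : F[X]) := by
    simpa only [map_natCast] using isUnit_C.mpr (isUnit_iff_ne_zero.mpr hn)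
  rw [separable_def, separable_def, derivative_expand, ← mul_assoc, IsCoprime.mul_right_iff,
    isCoprime_mul_unit_right_right hC, isCoprime_expand_iff hn0, and_iff_left hX.pow_right]

theorem splits_of_splits_expand_pow_char (p : ℕ) [ExpChar F p] {h : F[X]} {a : ℕ}
    (hs : (expand F (p ^ a) h).Splits) : h.Splits := by
  obtain rfl | hh := eq_or_ne h 0
  · exact Splits.zero
  have hmap := hs.map (iterateFrobenius F p a)
  rw [map_iterateFrobenius_expand] at hmap
  exact hmap.of_dvd (pow_ne_zero _ hh) (dvd_pow_self h (pow_pos (expChar_pos F p) a).ne')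

theorem exists_pow_eq_of_isRoot_of_splits_expand {n : ℕ} (hn : 0 < n) {h : F[X]} (hh : h ≠ 0)
    (hs : (expand F n h).Splits) {x : F} (hx : h.IsRoot x) : ∃ w, w ^ n = x := by
  have hdvd : (X ^ n - C x : F[X]) ∣ expand F n h := by
    simpa using map_dvd (expand F n) (dvd_iff_isRoot.mpr hx)
  have hsplits := hs.of_dvd ((expand_ne_zero hn).mpr hh) hdvd
  obtain ⟨w, hw⟩ := hsplits.exists_eval_eq_zero
    (by rw [degree_X_pow_sub_C hn]; exact_mod_cast hn.ne')
  exact ⟨w, by simpa [sub_eq_zero] using hw⟩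

theorem separable_iff_forall_rootMultiplicity_expand_le (p : ℕ) [ExpChar F p] {h : F[X]}
    {a m : ℕ} (hm : (m : F) ≠ 0) (h0 : h.coeff 0 ≠ 0) (hs : (expand F (p ^ a * m) h).Splits) :
    h.Separable ↔ ∀ w, (expand F (p ^ a * m) h).rootMultiplicity w ≤ p ^ a := by
  have hpa : 0 < p ^ a := pow_pos (expChar_pos F p) a
  have hm0 : 0 < m := Nat.pos_of_ne_zero (by rintro rfl; simp at hm)
  have hh : expand F m h ≠ 0 := (expand_ne_zero hm0).mpr (by rintro rfl; simp at h0)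
  rw [← expand_expand] at hs ⊢
  rw [← separable_expand_iff hm h0,
    ← nodup_roots_iff_of_splits hh (splits_of_splits_expand_pow_char p hs),
    Multiset.nodup_iff_count_le_one]
  simp only [count_roots, rootMultiplicity_expand_pow, mul_le_iff_le_one_right hpa]
  refine ⟨fun hle w => hle _, fun hle x => ?_⟩
  by_cases hx : (expand F m h).IsRoot x
  · obtain ⟨w, rfl⟩ := exists_pow_eq_of_isRoot_of_splits_expand hpa hh hs hx
    exact hle w
  · rw [rootMultiplicity_eq_zero hx]
    exact zero_le_one

theorem rootMultiplicity_C_mul_prod_X_sub_C {ι : Type*} (A : Finset ι) (u : ι → F) {e : F}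
    (he : e ≠ 0) (w : F) :
    (C e * ∏ r ∈ A, (X - C (u r))).rootMultiplicity w = {r ∈ A | u r = w}.card := by
  have hprod : ∏ r ∈ A, (X - C (u r)) = ((A.val.map u).map fun x => X - C x).prod := by
    rw [Multiset.map_map]
    rfl
  rw [← count_roots, roots_C_mul _ he, hprod, roots_multiset_prod_X_sub_C, Multiset.count_map,
    Finset.card_def, Finset.filter_val]
  simp only [eq_comm]

end Expand

theorem padicNorm_lt_natCast_iff (p : ℕ) [Fact p.Prime] (q : ℚ) {N : ℕ} (hN : 1 < N) :
    padicNorm p q < N ↔ ordProj[p] q.den < N := by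
  have hp : p.Prime := Fact.out
  have hdiv : padicNorm p q = padicNorm p q.num / padicNorm p q.den := by
    rw [← padicNorm.div, Rat.num_div_den]
  by_cases hd : p ∣ q.den
  · have hnum : padicNorm p q.num = 1 := by
      rw [padicNorm.int_eq_one_iff, Int.natCast_dvd]
      exact fun h => hp.not_dvd_one (q.reduced ▸ Nat.dvd_gcd h hd)
    have hden : padicNorm p q.den = ((p ^ q.den.factorization p : ℕ) : ℚ)⁻¹ := by
      rw [padicNorm.eq_zpow_of_nonzero (Nat.cast_ne_zero.mpr q.den_nz), padicValRat.of_nat,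
        Nat.factorization_def _ hp]
      simp
    rw [hdiv, hnum, hden, one_div, inv_inv, Nat.cast_lt]
  · have hden : padicNorm p q.den = 1 := (padicNorm.nat_eq_one_iff _).mpr hd
    rw [hdiv, hden, div_one, Nat.factorization_eq_zero_of_not_dvd hd, pow_zero]
    exact iff_of_true ((padicNorm.of_int _).trans_lt (by exact_mod_cast hN)) hN

theorem den_dvd_of_mul_eq_intCast {q : ℚ} {m z : ℤ} (h : q * m = z) : (q.den : ℤ) ∣ m := by
  obtain rfl | hm := eq_or_ne m 0
  · exact dvd_zero _
  have hq : q = Rat.divInt z m := by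
    rw [Rat.divInt_eq_div, eq_div_iff (by exact_mod_cast hm), h]
  exact hq ▸ Rat.den_dvd z m

theorem exists_strictMono_card_filter_lt {ι α : Type*} [LinearOrder α] (R : Finset ι)
    (σ : ι → α) :
    ∃ (n : ℕ) (ρ : Fin n → α) (i : Fin (n + 1) → ℕ), StrictMono ρ ∧ Set.range ρ = σ '' R ∧
      i 0 = 0 ∧ i (Fin.last n) = R.card ∧
      ∀ j, i j.castSucc = {r ∈ R | σ r < ρ j}.card ∧ i j.succ = {r ∈ R | σ r ≤ ρ j}.card := by
  set ρ := (R.image σ).orderEmbOfFin rfl with hρdef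
  have hρ : Set.range ρ = σ '' R := by simp [hρdef]
  have hσ : ∀ r ∈ R, ∃ t, ρ t = σ r := fun r hr => hρ.ge ⟨r, hr, rfl⟩
  refine ⟨_, ρ, fun k => {r ∈ R | ∃ j, j.castSucc < k ∧ ρ j = σ r}.card, ρ.strictMono, hρ,
    by simp, ?_, fun j => ⟨?_, ?_⟩⟩ <;> refine congrArg Finset.card ?_
  · exact Finset.filter_true_of_mem fun r hr => (hσ r hr).imp fun t ht => ⟨t.castSucc_lt_last, ht⟩
  all_goals
    refine Finset.filter_congr fun r hr => ?_
    obtain ⟨t, ht⟩ := hσ r hr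
    rw [← ht]
    simp [Fin.castSucc_lt_succ_iff]

namespace Setup

/-- The valuation of `Kbar` as a bundled `AddValuation`, giving access to Mathlib's lemmas. -/
def addValuation (S : Setup K Kbar) : AddValuation Kbar (WithTop ℚ) :=
  AddValuation.of S.v ((S.v_top_iff 0).mpr rfl) S.v_one S.v_add S.v_mul

variable {S : Setup K Kbar} {x y : Kbar} {q : ℚ}

theorem v_zero (S : Setup K Kbar) : S.v 0 = ⊤ :=
  (S.v_top_iff 0).mpr rfl

theorem v_ne_top (hx : x ≠ 0) : S.v x ≠ ⊤ :=
  fun h => hx ((S.v_top_iff x).mp h)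

theorem exists_v_eq_coe (hx : x ≠ 0) : ∃ q : ℚ, S.v x = q :=
  (WithTop.ne_top_iff_exists.mp (v_ne_top hx)).imp fun _ h => h.symm

theorem ne_zero_of_v_eq_coe (hx : S.v x = q) : x ≠ 0 := by
  rintro rfl
  exact WithTop.coe_ne_top (hx.symm.trans S.v_zero)

theorem v_pow_eq_coe (hx : S.v x = q) (n : ℕ) : S.v (x ^ n) = (n * q : ℚ) := by
  rw [← nsmul_eq_mul, WithTop.coe_nsmul, ← hx]
  exact S.addValuation.map_pow x n

theorem v_inv_eq_coe (hx : S.v x = q) : S.v x⁻¹ = (-q : ℚ) := by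
  have h := S.addValuation.map_inv (x := x)
  rw [show S.addValuation x = q from hx] at h
  exact h

theorem v_zpow_eq_coe (hx : S.v x = q) (n : ℤ) : S.v (x ^ n) = (n * q : ℚ) := by
  obtain ⟨m, rfl | rfl⟩ := n.eq_nat_or_neg
  · rw [zpow_natCast, v_pow_eq_coe hx, Int.cast_natCast]
  · rw [zpow_neg, zpow_natCast, v_inv_eq_coe (v_pow_eq_coe hx m), Int.cast_neg, Int.cast_natCast,
      neg_mul]

theorem v_eq_of_lt_v_sub (h : S.v y < S.v (x - y)) : S.v x = S.v y :=
  S.addValuation.map_eq_of_lt_sub h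

theorem v_div_add_v (hy : y ≠ 0) : S.v (x / y) + S.v y = S.v x := by
  rw [← S.v_mul, div_mul_cancel₀ x hy]

theorem v_div_nonneg_iff (hy : y ≠ 0) : 0 ≤ S.v (x / y) ↔ S.v y ≤ S.v x := by
  rw [← v_div_add_v (x := x) hy, ← WithTop.add_le_add_iff_right (v_ne_top (S := S) hy), zero_add]

theorem v_div_pos_iff (hy : y ≠ 0) : 0 < S.v (x / y) ↔ S.v y < S.v x := by
  rw [← v_div_add_v (x := x) hy, ← WithTop.add_lt_add_iff_right (v_ne_top (S := S) hy), zero_add]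

end Setup

section Residue

variable {S : Setup K Kbar} {x y : Kbar}

theorem mk_eq_zero_iff {x : intRing S} :
    Ideal.Quotient.mk (maxIdeal S) x = 0 ↔ 0 < S.v (x : Kbar) :=
  Ideal.Quotient.eq_zero_iff_mem

theorem red_eq_mk (hx : 0 ≤ S.v x) : red S x = Ideal.Quotient.mk (maxIdeal S) ⟨x, hx⟩ :=
  dif_pos hx

theorem red_eq_zero_iff (hx : 0 ≤ S.v x) : red S x = 0 ↔ 0 < S.v x := by
  rw [red_eq_mk hx, mk_eq_zero_iff]

theorem red_eq_red_iff (hx : 0 ≤ S.v x) (hy : 0 ≤ S.v y) :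
    red S x = red S y ↔ 0 < S.v (x - y) := by
  rw [red_eq_mk hx, red_eq_mk hy, Ideal.Quotient.eq]
  exact Iff.rfl

instance maxIdeal_isMaximal (S : Setup K Kbar) : (maxIdeal S).IsMaximal := by
  refine Ideal.isMaximal_iff.mpr ⟨fun h => (show S.v 1 ≤ 0 from S.v_one.le).not_gt h, ?_⟩
  intro J x _ hx hxJ
  have hv : S.v (x : Kbar) = (0 : ℚ) := le_antisymm (not_lt.mp hx) x.2
  have hv' : S.v (x : Kbar)⁻¹ = (0 : ℚ) := by simpa using Setup.v_inv_eq_coe hv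
  have hinv : (⟨(x : Kbar)⁻¹, hv'.ge⟩ : intRing S) * x = 1 :=
    Subtype.ext (inv_mul_cancel₀ (Setup.ne_zero_of_v_eq_coe hv))
  exact hinv ▸ J.mul_mem_left _ hxJ

noncomputable instance (S : Setup K Kbar) : Field (Residue S) := Ideal.Quotient.field (maxIdeal S)

theorem charP_residue {p : ℕ} (hp : p.Prime) (hres : ((0 : ℚ) : WithTop ℚ) < S.vK (p : K)) :
    CharP (Residue S) p := by
  rw [CharP.charP_iff_prime_eq_zero hp, ← map_natCast (Ideal.Quotient.mk (maxIdeal S)),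
    mk_eq_zero_iff]
  simpa [Setup.vK] using hres

end Residue

/-- `g` equals `c` times a polynomial over the valuation ring of `Kbar` whose reduction is `h`. The
scale `c` is explicit so that reductions of linear factors can be multiplied together. -/
def IsScaledReduction (S : Setup K Kbar) (c : Kbar) (g : Kbar[X]) (h : (Residue S)[X]) : Prop :=
  ∃ P : (intRing S)[X], g = C c * P.map (intRing S).subtype ∧
    P.map (Ideal.Quotient.mk (maxIdeal S)) = h

namespace IsScaledReduction

variable {S : Setup K Kbar} {c c' : Kbar} {g g' : Kbar[X]} {h h' : (Residue S)[X]}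

theorem const (a : Kbar) : IsScaledReduction S a (C a) 1 :=
  ⟨1, by simp, by simp⟩

theorem mul (H : IsScaledReduction S c g h) (H' : IsScaledReduction S c' g' h') :
    IsScaledReduction S (c * c') (g * g') (h * h') := by
  obtain ⟨P, rfl, rfl⟩ := H
  obtain ⟨P', rfl, rfl⟩ := H'
  exact ⟨P * P', by rw [Polynomial.map_mul, C_mul, mul_mul_mul_comm], by rw [Polynomial.map_mul]⟩

theorem prod {ι : Type*} {A : Finset ι} {c : ι → Kbar} {g : ι → Kbar[X]}
    {h : ι → (Residue S)[X]} (H : ∀ r ∈ A, IsScaledReduction S (c r) (g r) (h r)) :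
    IsScaledReduction S (∏ r ∈ A, c r) (∏ r ∈ A, g r) (∏ r ∈ A, h r) := by
  induction A using Finset.induction_on with
  | empty => exact const 1
  | insert a A ha ih =>
    simp only [Finset.prod_insert ha]
    exact (H a (A.mem_insert_self a)).mul (ih fun r hr => H r (Finset.mem_insert_of_mem hr))

theorem rescale (H : IsScaledReduction S c g h) (hc : c' ≠ 0) (hv : S.v c = S.v c') :
    IsScaledReduction S c' g (C (red S (c / c')) * h) := by
  obtain ⟨P, rfl, rfl⟩ := H
  have hint : 0 ≤ S.v (c / c') := (Setup.v_div_nonneg_iff hc).mpr hv.ge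
  refine ⟨C ⟨c / c', hint⟩ * P, ?_, ?_⟩
  · rw [Polynomial.map_mul, map_C, ← mul_assoc, ← C_mul]
    exact congrArg (C · * _) (mul_div_cancel₀ c hc).symm
  · rw [Polynomial.map_mul, map_C, red_eq_mk hint]

theorem v_le_v_coeff (H : IsScaledReduction S c g h) (m : ℕ) : S.v c ≤ S.v (g.coeff m) := by
  obtain ⟨P, rfl, rfl⟩ := H
  rw [coeff_C_mul, coeff_map, S.v_mul]
  exact le_add_of_nonneg_right (P.coeff m).2

theorem coeff_eq_red (H : IsScaledReduction S c g h) (hc : c ≠ 0) (m : ℕ) :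
    h.coeff m = red S (g.coeff m / c) := by
  obtain ⟨P, rfl, rfl⟩ := H
  rw [coeff_C_mul, coeff_map, coeff_map, mul_div_cancel_left₀ _ hc]
  exact (red_eq_mk (P.coeff m).2).symm

theorem coeff_ne_zero_iff (H : IsScaledReduction S c g h) (hc : c ≠ 0) (m : ℕ) :
    h.coeff m ≠ 0 ↔ S.v (g.coeff m) = S.v c := by
  have hle := H.v_le_v_coeff m
  rw [H.coeff_eq_red hc, Ne, red_eq_zero_iff ((Setup.v_div_nonneg_iff hc).mpr hle),
    Setup.v_div_pos_iff hc, not_lt, hle.ge_iff_eq']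

end IsScaledReduction

section RootReduction

variable {S : Setup K Kbar} {f : K[X]} {θ : Kbar}

theorem exists_isScaledReduction_linear (hθ : θ ≠ 0) (r : Kbar) :
    ∃ c ≠ 0, IsScaledReduction S c (C θ * X - C r)
      (if S.v θ < S.v r then X else if S.v r = S.v θ then X - C (red S (r / θ)) else 1) := by
  obtain hle | hlt := le_or_gt (S.v θ) (S.v r)
  · have hint : 0 ≤ S.v (r / θ) := (Setup.v_div_nonneg_iff hθ).mpr hle
    refine ⟨θ, hθ, X - C ⟨r / θ, hint⟩, ?_, ?_⟩
    · simp only [Polynomial.map_sub, map_X, map_C, Subring.subtype_apply, mul_sub, ← C_mul,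
        mul_div_cancel₀ r hθ]
    · rw [Polynomial.map_sub, map_X, map_C, ← red_eq_mk hint]
      split_ifs with hgt heq
      · rw [(red_eq_zero_iff hint).mpr ((Setup.v_div_pos_iff hθ).mpr hgt), C_0, sub_zero]
      · rfl
      · exact absurd (hle.lt_of_ne' heq) hgt
  · have hr : r ≠ 0 := by
      rintro rfl
      exact not_top_lt (S.v_zero ▸ hlt)
    have hpos : 0 < S.v (θ / r) := (Setup.v_div_pos_iff hr).mpr hlt
    refine ⟨-r, neg_ne_zero.mpr hr, 1 - C ⟨θ / r, hpos.le⟩ * X, ?_, ?_⟩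
    · simp only [Polynomial.map_sub, Polynomial.map_mul, Polynomial.map_one, map_X, map_C,
        Subring.subtype_apply, mul_sub, ← mul_assoc, ← C_mul, neg_mul, mul_div_cancel₀ θ hr,
        mul_one, C_neg]
      ring
    · rw [if_neg hlt.not_gt, if_neg hlt.ne, Polynomial.map_sub, Polynomial.map_mul, map_X, map_C,
        mk_eq_zero_iff.mpr hpos, Polynomial.map_one, C_0, zero_mul, sub_zero]

theorem map_eq_C_mul_prod_rootFinset [IsAlgClosed Kbar] (hsep : f.Separable) :
    f.map (algebraMap K Kbar) = C (algebraMap K Kbar f.leadingCoeff) *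
      ∏ r ∈ rootFinset (Kbar := Kbar) f, (X - C r) := by
  have hnodup : (f.map (algebraMap K Kbar)).roots.Nodup := nodup_roots hsep.map
  rw [Finset.prod, rootFinset, Multiset.toFinset_val, hnodup.dedup, ← leadingCoeff_map]
  exact (IsAlgClosed.splits _).eq_prod_roots

theorem card_rootFinset [IsAlgClosed Kbar] (hsep : f.Separable) :
    (rootFinset (Kbar := Kbar) f).card = f.natDegree := by
  have hnodup : (f.map (algebraMap K Kbar)).roots.Nodup := nodup_roots hsep.map
  rw [rootFinset, Multiset.toFinset_card_of_nodup hnodup,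
    ← (IsAlgClosed.splits _).natDegree_eq_card_roots, natDegree_map]

theorem zero_notMem_rootFinset (h0 : f.coeff 0 ≠ 0) : (0 : Kbar) ∉ rootFinset f := by
  rw [rootFinset, Multiset.mem_toFinset, mem_roots', IsRoot, ← coeff_zero_eq_eval_zero, coeff_map]
  exact fun h => h0 (by simpa using h.2)

/-- The monic polynomial over the residue field whose roots are the reductions of `r / θ`, where
`r` runs over the roots of `f` with `v r = v θ`. -/
noncomputable def edgeFactor (S : Setup K Kbar) (f : K[X]) (θ : Kbar) : (Residue S)[X] :=
  ∏ r ∈ rootFinset f with S.v r = S.v θ, (X - C (red S (r / θ)))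

theorem exists_isScaledReduction_edgeFactor (hsep : f.Separable) (hθ : θ ≠ 0) :
    ∃ c ≠ 0, IsScaledReduction S c ((f.map (algebraMap K Kbar)).comp (C θ * X))
      (X ^ {r ∈ (rootFinset f : Finset Kbar) | S.v θ < S.v r}.card * edgeFactor S f θ) := by
  have := S.algClosed
  choose c hc H using exists_isScaledReduction_linear (S := S) hθ
  have hlc : algebraMap K Kbar f.leadingCoeff ≠ 0 := by simpa using hsep.ne_zero
  refine ⟨_ * ∏ r ∈ rootFinset f, c r,
    mul_ne_zero hlc (Finset.prod_ne_zero_iff.mpr fun r _ => hc r), ?_⟩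
  convert (IsScaledReduction.const _).mul (.prod fun r _ => H r) using 1
  · simp only [map_eq_C_mul_prod_rootFinset hsep, mul_comp, prod_comp, C_comp, sub_comp, X_comp]
  · have hfilter : {r ∈ rootFinset (Kbar := Kbar) f | ¬S.v θ < S.v r ∧ S.v r = S.v θ} =
        {r ∈ (rootFinset f : Finset Kbar) | S.v r = S.v θ} :=
      Finset.filter_congr fun r _ => ⟨And.right, fun h => ⟨h.not_gt, h⟩⟩
    rw [one_mul, edgeFactor, Finset.prod_ite, Finset.prod_const, ← Finset.prod_filter,
      Finset.filter_filter, hfilter]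

theorem red_div_ne_zero {r : Kbar} (hθ : θ ≠ 0) (h : S.v r = S.v θ) : red S (r / θ) ≠ 0 := by
  rw [Ne, red_eq_zero_iff ((Setup.v_div_nonneg_iff hθ).mpr h.ge), Setup.v_div_pos_iff hθ]
  exact h.not_gt

theorem coeff_zero_edgeFactor_ne_zero (hθ : θ ≠ 0) : (edgeFactor S f θ).coeff 0 ≠ 0 := by
  rw [edgeFactor, coeff_zero_prod, Finset.prod_ne_zero_iff]
  intro r hr
  simpa using red_div_ne_zero hθ (Finset.mem_filter.mp hr).2

theorem edgeFactor_ne_zero (hθ : θ ≠ 0) : edgeFactor S f θ ≠ 0 := fun h =>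
  coeff_zero_edgeFactor_ne_zero (S := S) (f := f) hθ (by rw [h, coeff_zero])

theorem natDegree_X_pow_mul_edgeFactor :
    (X ^ {r ∈ (rootFinset f : Finset Kbar) | S.v θ < S.v r}.card * edgeFactor S f θ).natDegree =
      {r ∈ (rootFinset f : Finset Kbar) | S.v θ ≤ S.v r}.card := by
  have hmonic : ∀ r ∈ {r ∈ (rootFinset f : Finset Kbar) | S.v r = S.v θ},
      (X - C (red S (r / θ))).Monic := fun r _ => monic_X_sub_C _
  have hdisj : Disjoint {r ∈ (rootFinset f : Finset Kbar) | S.v θ < S.v r}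
      {r ∈ (rootFinset f : Finset Kbar) | S.v r = S.v θ} :=
    Finset.disjoint_filter.mpr fun r _ hlt heq => hlt.ne' heq
  rw [edgeFactor, (monic_X_pow _).natDegree_mul (monic_prod_of_monic _ _ hmonic),
    natDegree_X_pow, natDegree_prod_of_monic _ _ hmonic]
  simp only [natDegree_X_sub_C, Finset.sum_const, smul_eq_mul, mul_one]
  rw [← Finset.card_union_of_disjoint hdisj, ← Finset.filter_or]
  simp only [le_iff_lt_or_eq, eq_comm]

theorem natTrailingDegree_X_pow_mul_edgeFactor (hθ : θ ≠ 0) :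
    (X ^ {r ∈ (rootFinset f : Finset Kbar) | S.v θ < S.v r}.card *
        edgeFactor S f θ).natTrailingDegree =
      {r ∈ (rootFinset f : Finset Kbar) | S.v θ < S.v r}.card := by
  rw [mul_comm, natTrailingDegree_mul_X_pow (edgeFactor_ne_zero hθ),
    natTrailingDegree_eq_zero.mpr (Or.inr (coeff_zero_edgeFactor_ne_zero hθ)), zero_add]

end RootReduction

section Faces

/-- The line `m ↦ γ + m * ρ` supports the Newton polygon of `f`, and `[a, b]` is the smallest
interval over which they touch: an edge of slope `ρ` if `a < b`, a vertex if `a = b`. -/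
structure IsNPFace (S : Setup K Kbar) (f : K[X]) (ρ γ : ℚ) (a b : ℕ) : Prop where
  le : ∀ m : ℕ, ((γ + m * ρ : ℚ) : WithTop ℚ) ≤ S.vK (f.coeff m)
  left : S.vK (f.coeff a) = ((γ + a * ρ : ℚ) : WithTop ℚ)
  right : S.vK (f.coeff b) = ((γ + b * ρ : ℚ) : WithTop ℚ)
  mem : ∀ m : ℕ, S.vK (f.coeff m) = ((γ + m * ρ : ℚ) : WithTop ℚ) → a ≤ m ∧ m ≤ b

variable {S : Setup K Kbar} {f : K[X]} {ρ γ γ' : ℚ} {a b a' b' : ℕ}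

namespace Setup

theorem ne_zero_of_vK_eq_coe {x : K} {q : ℚ} (h : S.vK x = q) : x ≠ 0 := by
  rintro rfl
  exact S.ne_zero_of_v_eq_coe h (map_zero _)

theorem exists_vK_eq_coe {x : K} (hx : x ≠ 0) : ∃ q : ℚ, S.vK x = q :=
  exists_v_eq_coe (by simpa using hx)

end Setup

namespace IsNPFace

theorem intercept_le (H : IsNPFace S f ρ γ a b) (H' : IsNPFace S f ρ γ' a' b') : γ ≤ γ' := by
  have h : γ + a' * ρ ≤ γ' + a' * ρ := by exact_mod_cast H'.left ▸ H.le a'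
  linarith

theorem unique (H : IsNPFace S f ρ γ a b) (H' : IsNPFace S f ρ γ' a' b') :
    γ = γ' ∧ a = a' ∧ b = b' := by
  obtain rfl := (H.intercept_le H').antisymm (H'.intercept_le H)
  exact ⟨rfl, (H.mem _ H'.left).1.antisymm (H'.mem _ H.left).1,
    (H'.mem _ H.right).2.antisymm (H.mem _ H'.right).2⟩

end IsNPFace

theorem IsScaledReduction.isNPFace {θ c : Kbar} {h : (Residue S)[X]}
    (H : IsScaledReduction S c ((f.map (algebraMap K Kbar)).comp (C θ * X)) h) (hh : h ≠ 0)
    (hθ : S.v θ = (-ρ : ℚ)) (hc : S.v c = γ) :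
    IsNPFace S f ρ γ h.natTrailingDegree h.natDegree := by
  have hcoeff : ∀ m : ℕ, S.v (((f.map (algebraMap K Kbar)).comp (C θ * X)).coeff m) =
      S.vK (f.coeff m) + ((m * -ρ : ℚ) : WithTop ℚ) := fun m => by
    rw [comp_C_mul_X_coeff, coeff_map, S.v_mul, Setup.v_pow_eq_coe hθ, Setup.vK]
  have hshift : ∀ m : ℕ,
      ((γ + m * ρ : ℚ) : WithTop ℚ) + ((m * -ρ : ℚ) : WithTop ℚ) = γ := fun m => by
    rw [← WithTop.coe_add]
    congr 1
    ring
  have htouch : ∀ m : ℕ,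
      S.vK (f.coeff m) = ((γ + m * ρ : ℚ) : WithTop ℚ) ↔ h.coeff m ≠ 0 := fun m => by
    rw [H.coeff_ne_zero_iff (Setup.ne_zero_of_v_eq_coe hc), hcoeff, hc, ← hshift m,
      WithTop.add_right_inj WithTop.coe_ne_top]
  refine ⟨fun m => ?_, ?_, ?_, fun m hm => ?_⟩
  · rw [← WithTop.add_le_add_iff_right (WithTop.coe_ne_top (a := m * -ρ)), hshift, ← hcoeff, ← hc]
    exact H.v_le_v_coeff m
  · exact (htouch _).mpr (trailingCoeff_nonzero_iff_nonzero.mpr hh)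
  · exact (htouch _).mpr (leadingCoeff_ne_zero.mpr hh)
  · exact ⟨natTrailingDegree_le_of_ne_zero ((htouch m).mp hm),
      le_natDegree_of_ne_zero ((htouch m).mp hm)⟩

namespace IsNPVertices

variable {s : ℕ} {i : Fin (s + 1) → ℕ} {c : Fin (s + 1) → ℚ}

theorem length_pos (h : IsNPVertices S f s i c) (j : Fin s) : (0 : ℚ) < i j.succ - i j.castSucc :=
  sub_pos.mpr (by exact_mod_cast h.mono Fin.castSucc_lt_succ)

theorem line_eq (h : IsNPVertices S f s i c) (j : Fin s) (x : ℚ) :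
    c j.castSucc + NPslope i c j * (x - i j.castSucc) =
      c j.succ + NPslope i c j * (x - i j.succ) := by
  have := div_mul_cancel₀ (c j.succ - c j.castSucc) (h.length_pos j).ne'
  rw [NPslope]
  linarith

theorem line_le (h : IsNPVertices S f s i c) (j : Fin s) {m : ℕ} {q : ℚ}
    (hq : S.vK (f.coeff m) = q) : c j.castSucc + NPslope i c j * (m - i j.castSucc) ≤ q := by
  have := (div_le_iff₀ (h.length_pos j)).mpr (h.support j m q hq)
  rw [mul_div_right_comm] at this
  rw [NPslope]
  linarith

theorem left_le_of_mem_line (h : IsNPVertices S f s i c) (j : Fin s) {m : ℕ}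
    (hm : S.vK (f.coeff m) = (c j.castSucc + NPslope i c j * (m - i j.castSucc) : ℚ)) :
    i j.castSucc ≤ m := by
  obtain hj | hj := eq_or_ne j.castSucc 0
  · rw [hj, h.first]
    exact natTrailingDegree_le_of_ne_zero (Setup.ne_zero_of_vK_eq_coe hm)
  obtain ⟨k, hk⟩ := Fin.exists_succ_eq.mpr hj
  have hkj : k < j := by rw [← Fin.castSucc_lt_castSucc_iff, ← hk]; exact Fin.castSucc_lt_succ
  have hle := h.line_le k hm
  rw [h.line_eq k, hk] at hle
  by_contra! hlt
  have hlt : (m : ℚ) < i j.castSucc := by exact_mod_cast hlt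
  nlinarith [h.slope_mono hkj]

theorem le_right_of_mem_line (h : IsNPVertices S f s i c) (j : Fin s) {m : ℕ}
    (hm : S.vK (f.coeff m) = (c j.succ + NPslope i c j * (m - i j.succ) : ℚ)) :
    m ≤ i j.succ := by
  obtain hj | hj := eq_or_ne j.succ (Fin.last s)
  · rw [hj, h.last]
    exact le_natDegree_of_ne_zero (Setup.ne_zero_of_vK_eq_coe hm)
  obtain ⟨k, hk⟩ := Fin.exists_castSucc_eq.mpr hj
  have hjk : j < k := by rw [← Fin.castSucc_lt_castSucc_iff, hk]; exact Fin.castSucc_lt_succ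
  have hle := h.line_le k hm
  rw [hk] at hle
  by_contra! hlt
  have hlt : (i j.succ : ℚ) < m := by exact_mod_cast hlt
  nlinarith [h.slope_mono hjk]

theorem isNPFace (h : IsNPVertices S f s i c) (j : Fin s) :
    IsNPFace S f (NPslope i c j) (c j.castSucc - i j.castSucc * NPslope i c j)
      (i j.castSucc) (i j.succ) := by
  have hline : ∀ m : ℕ, c j.castSucc - i j.castSucc * NPslope i c j + m * NPslope i c j =
      c j.castSucc + NPslope i c j * (m - i j.castSucc) := fun m => by ring
  refine ⟨fun m => ?_, ?_, ?_, fun m hm => ⟨?_, ?_⟩⟩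
  · obtain hm | hm := eq_or_ne (f.coeff m) 0
    · rw [hm, Setup.vK, map_zero, S.v_zero]
      exact le_top
    · obtain ⟨q, hq⟩ := Setup.exists_vK_eq_coe (S := S) hm
      rw [hq, hline, WithTop.coe_le_coe]
      exact h.line_le j hq
  · rw [hline, h.vert, sub_self, mul_zero, add_zero]
  · rw [hline, h.line_eq, h.vert, sub_self, mul_zero, add_zero]
  · exact h.left_le_of_mem_line j (by rw [hm, hline])
  · exact h.le_right_of_mem_line j (by rw [hm, hline, h.line_eq])

end IsNPVertices

theorem exists_isNPVertices_of_isNPFace {s : ℕ} {i : Fin (s + 1) → ℕ} {ρ γ : Fin s → ℚ}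
    (hf : f ≠ 0) (hi : StrictMono i) (hρ : StrictMono ρ) (hfirst : i 0 = f.natTrailingDegree)
    (hlast : i (Fin.last s) = f.natDegree)
    (H : ∀ j, IsNPFace S f (ρ j) (γ j) (i j.castSucc) (i j.succ)) :
    ∃ c, IsNPVertices S f s i c ∧ NPslope i c = ρ := by
  have hc : ∀ k, ∃ q : ℚ, S.vK (f.coeff (i k)) = q := by
    intro k
    cases k using Fin.cases with
    | zero =>
      exact Setup.exists_vK_eq_coe (hfirst ▸ trailingCoeff_nonzero_iff_nonzero.mpr hf)
    | succ j => exact ⟨_, (H j).right⟩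
  choose c hc using hc
  have hleft : ∀ j, c j.castSucc = γ j + i j.castSucc * ρ j := fun j => by
    exact_mod_cast (hc _).symm.trans (H j).left
  have hright : ∀ j, c j.succ = γ j + i j.succ * ρ j := fun j => by
    exact_mod_cast (hc _).symm.trans (H j).right
  have hdiff : ∀ j, c j.succ - c j.castSucc = ρ j * (i j.succ - i j.castSucc) := fun j => by
    rw [hleft, hright]
    ring
  have hpos : ∀ j : Fin s, (0 : ℚ) < i j.succ - i j.castSucc := fun j =>
    sub_pos.mpr (by exact_mod_cast hi Fin.castSucc_lt_succ)
  have hslope : NPslope i c = ρ := funext fun j => by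
    rw [NPslope, hdiff, mul_div_cancel_right₀ _ (hpos j).ne']
  refine ⟨c, ⟨hi, hfirst, hlast, hc, hslope ▸ hρ, fun j m q hq => ?_⟩, hslope⟩
  have hle : γ j + m * ρ j ≤ q := by exact_mod_cast hq ▸ (H j).le m
  rw [hdiff, mul_right_comm, hleft]
  exact mul_le_mul_of_nonneg_right (by linarith) (hpos j).le

end Faces

section NewtonPolygon

variable {S : Setup K Kbar} {f : K[X]} {θ : Kbar} {ρ : ℚ}

theorem exists_isNPFace (hsep : f.Separable) (hθ : S.v θ = (-ρ : ℚ)) :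
    ∃ γ, IsNPFace S f ρ γ {r ∈ (rootFinset f : Finset Kbar) | S.v θ < S.v r}.card
      {r ∈ (rootFinset f : Finset Kbar) | S.v θ ≤ S.v r}.card := by
  have hθ0 : θ ≠ 0 := Setup.ne_zero_of_v_eq_coe hθ
  obtain ⟨c, hc, H⟩ := exists_isScaledReduction_edgeFactor (S := S) hsep hθ0
  obtain ⟨γ, hγ⟩ := Setup.exists_v_eq_coe (S := S) hc
  have hface := H.isNPFace (mul_ne_zero (pow_ne_zero _ X_ne_zero) (edgeFactor_ne_zero hθ0)) hθ hγ
  rw [natTrailingDegree_X_pow_mul_edgeFactor hθ0, natDegree_X_pow_mul_edgeFactor] at hface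
  exact ⟨γ, hface⟩

theorem exists_isNPVertices (S : Setup K Kbar) (hsep : f.Separable) (h0 : f.coeff 0 ≠ 0) :
    ∃ s i c, IsNPVertices S f s i c ∧ ∀ r ∈ rootFinset (Kbar := Kbar) f, ∀ lam : ℚ,
      S.v r = lam → ∃ j, NPslope i c j = -lam := by
  have := S.algClosed
  have hval : ∀ r ∈ rootFinset (Kbar := Kbar) f, ∃ q : ℚ, S.v r = (-q : ℚ) := fun r hr => by
    obtain ⟨q, hq⟩ := S.exists_v_eq_coe (ne_of_mem_of_not_mem hr (zero_notMem_rootFinset h0))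
    exact ⟨-q, by rw [hq, neg_neg]⟩
  choose! σ hσ using hval
  obtain ⟨s, ρ, i, hρ, hrange, hfirst, hlast, hi⟩ := exists_strictMono_card_filter_lt
    (rootFinset (Kbar := Kbar) f) σ
  have hmem : ∀ j, ∃ θ ∈ rootFinset (Kbar := Kbar) f, σ θ = ρ j := fun j => hrange.le ⟨j, rfl⟩
  have hface : ∀ j, ∃ γ, IsNPFace S f (ρ j) γ (i j.castSucc) (i j.succ) := fun j => by
    obtain ⟨θ, hθ, hθρ⟩ := hmem j
    have hlt : {r ∈ (rootFinset f : Finset Kbar) | S.v θ < S.v r} =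
        {r ∈ (rootFinset f : Finset Kbar) | σ r < σ θ} :=
      Finset.filter_congr fun r hr => by rw [hσ r hr, hσ θ hθ, WithTop.coe_lt_coe, neg_lt_neg_iff]
    have hle : {r ∈ (rootFinset f : Finset Kbar) | S.v θ ≤ S.v r} =
        {r ∈ (rootFinset f : Finset Kbar) | σ r ≤ σ θ} :=
      Finset.filter_congr fun r hr => by rw [hσ r hr, hσ θ hθ, WithTop.coe_le_coe, neg_le_neg_iff]
    rw [(hi j).1, (hi j).2, ← hθρ, ← hlt, ← hle]
    exact exists_isNPFace hsep (hσ θ hθ)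
  choose γ hface using hface
  have hmono : StrictMono i := Fin.strictMono_iff_lt_succ.mpr fun j => by
    obtain ⟨θ, hθ, hθρ⟩ := hmem j
    rw [(hi j).1, (hi j).2]
    refine Finset.card_lt_card (Finset.ssubset_iff_of_subset ?_ |>.mpr ⟨θ, ?_, ?_⟩)
    · exact Finset.monotone_filter_right _ fun r _ => le_of_lt
    · exact Finset.mem_filter.mpr ⟨hθ, hθρ.le⟩
    · simp [hθρ]
  obtain ⟨c, hNP, hslope⟩ := exists_isNPVertices_of_isNPFace hsep.ne_zero hmono hρ
    (by rw [hfirst, natTrailingDegree_eq_zero.mpr (Or.inr h0)])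
    (by rw [hlast, card_rootFinset hsep]) hface
  refine ⟨s, i, c, hNP, fun r hr lam hlam => ?_⟩
  obtain ⟨j, hj⟩ := hrange.ge ⟨r, hr, rfl⟩
  have hlam : -σ r = lam := by exact_mod_cast (hσ r hr).symm.trans hlam
  exact ⟨j, by rw [hslope, hj, ← hlam, neg_neg]⟩

theorem exists_pow_den_eq_zpow {π : K} (hπ : S.vK π = ((1 : ℚ) : WithTop ℚ)) (ρ : ℚ) :
    ∃ θ : Kbar, θ ^ ρ.den = algebraMap K Kbar π ^ (-ρ.num) ∧ S.v θ = (-ρ : ℚ) := by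
  have := S.algClosed
  have hπ0 : algebraMap K Kbar π ≠ 0 := Setup.ne_zero_of_v_eq_coe hπ
  obtain ⟨θ, hθ⟩ := IsAlgClosed.exists_pow_nat_eq (algebraMap K Kbar π ^ (-ρ.num)) ρ.den_pos
  have hθ0 : θ ≠ 0 := by
    rintro rfl
    exact zpow_ne_zero _ hπ0 (hθ.symm.trans (zero_pow ρ.den_nz))
  obtain ⟨t, ht⟩ := Setup.exists_v_eq_coe (S := S) hθ0
  have hpow : ((-ρ.num : ℤ) : ℚ) * 1 = ρ.den * t := by
    exact_mod_cast (Setup.v_zpow_eq_coe hπ _).symm.trans (hθ ▸ Setup.v_pow_eq_coe ht _)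
  refine ⟨θ, hθ, ht.trans (congrArg _ ?_)⟩
  have hden : (ρ.den : ℚ) ≠ 0 := by exact_mod_cast ρ.den_nz
  apply mul_left_cancel₀ hden
  rw [← hpow, mul_neg, mul_comm (ρ.den : ℚ), Rat.mul_den_eq_num]
  simp

end NewtonPolygon

section EdgeReduction

variable {S : Setup K Kbar} {π : K} {f : K[X]} {θ : Kbar} {ρ γ : ℚ} {a b : ℕ} {q₁ : ℤ}

theorem coeff_redEdge (nρ : ℤ) (n j : ℕ) :
    (redEdge S π f a b q₁ nρ n).coeff j = if j ≤ (b - a) / n then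
      red S (algebraMap K Kbar (f.coeff (n * j + a)) *
        algebraMap K Kbar π ^ (-(q₁ + (j : ℤ) * nρ))) else 0 := by
  simp [redEdge, finsetSum_coeff, coeff_X_pow]

theorem den_dvd_of_v_comp_coeff_eq (hπ : S.vK π = ((1 : ℚ) : WithTop ℚ))
    (hθ : S.v θ = (-ρ : ℚ)) {k : ℕ}
    (h : S.v (((f.map (algebraMap K Kbar)).comp (C θ * X)).coeff (k + a)) =
      S.v (algebraMap K Kbar π ^ q₁ * θ ^ a)) : ρ.den ∣ k := by
  rw [comp_C_mul_X_coeff, coeff_map, S.v_mul, S.v_mul, Setup.v_zpow_eq_coe hπ,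
    Setup.v_pow_eq_coe hθ, Setup.v_pow_eq_coe hθ] at h
  have hne : f.coeff (k + a) ≠ 0 := fun hf => by
    rw [hf, map_zero, S.v_zero, top_add] at h
    exact WithTop.coe_ne_top h.symm
  obtain ⟨z, hz⟩ := S.v_base_int _ hne
  have hval : (z + (k + a : ℕ) * -ρ : ℚ) = q₁ * 1 + a * -ρ := by exact_mod_cast hz ▸ h
  have hint : ρ * (k : ℤ) = (z - q₁ : ℤ) := by
    push_cast at hval ⊢
    linarith
  exact Int.natCast_dvd_natCast.mp (den_dvd_of_mul_eq_intCast hint)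

theorem expand_redEdge (hπ : S.vK π = ((1 : ℚ) : WithTop ℚ)) (hθ : S.v θ = (-ρ : ℚ))
    (hpow : θ ^ ρ.den = algebraMap K Kbar π ^ (-ρ.num)) {h : (Residue S)[X]}
    (H : IsScaledReduction S (algebraMap K Kbar π ^ q₁ * θ ^ a)
      ((f.map (algebraMap K Kbar)).comp (C θ * X)) (X ^ a * h)) (hdeg : h.natDegree ≤ b - a) :
    expand _ ρ.den (redEdge S π f a b q₁ ρ.num ρ.den) = h := by
  have hθ0 : θ ≠ 0 := Setup.ne_zero_of_v_eq_coe hθ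
  have hπ0 : algebraMap K Kbar π ≠ 0 := Setup.ne_zero_of_v_eq_coe hπ
  have hscale : algebraMap K Kbar π ^ q₁ * θ ^ a ≠ 0 :=
    mul_ne_zero (zpow_ne_zero _ hπ0) (pow_ne_zero _ hθ0)
  ext k
  rw [coeff_expand ρ.den_pos]
  split_ifs with hk
  · obtain ⟨j, rfl⟩ := hk
    rw [Nat.mul_div_cancel_left _ ρ.den_pos, coeff_redEdge]
    split_ifs with hj
    · have hθj : θ ^ (ρ.den * j) = algebraMap K Kbar π ^ (-(j * ρ.num)) := by
        rw [pow_mul, hpow, ← zpow_natCast, ← zpow_mul, neg_mul, mul_comm]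
      rw [← coeff_X_pow_mul h a, H.coeff_eq_red hscale, comp_C_mul_X_coeff, coeff_map, pow_add,
        ← mul_assoc, mul_div_mul_right _ _ (pow_ne_zero _ hθ0), hθj, mul_div_assoc,
        ← zpow_sub₀ hπ0]
      congr 3
      ring
    · rw [Nat.le_div_iff_mul_le ρ.den_pos, mul_comm, not_le] at hj
      exact (coeff_eq_zero_of_natDegree_lt (hdeg.trans_lt hj)).symm
  · by_contra hne
    rw [← coeff_X_pow_mul h a] at hne
    exact hk (den_dvd_of_v_comp_coeff_eq hπ hθ ((H.coeff_ne_zero_iff hscale _).mp (Ne.symm hne)))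

theorem IsNPFace.exists_expand_redEdge_eq (H : IsNPFace S f ρ γ a b) (hsep : f.Separable)
    (hπ : S.vK π = ((1 : ℚ) : WithTop ℚ)) (hθ : S.v θ = (-ρ : ℚ))
    (hpow : θ ^ ρ.den = algebraMap K Kbar π ^ (-ρ.num)) (hq : (q₁ : ℚ) = γ + a * ρ) :
    ∃ e ≠ 0, expand _ ρ.den (redEdge S π f a b q₁ ρ.num ρ.den) = C e * edgeFactor S f θ := by
  have hθ0 : θ ≠ 0 := Setup.ne_zero_of_v_eq_coe hθ
  have hπ0 : algebraMap K Kbar π ≠ 0 := Setup.ne_zero_of_v_eq_coe hπ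
  obtain ⟨c, hc, R⟩ := exists_isScaledReduction_edgeFactor (S := S) hsep hθ0
  obtain ⟨γ', hγ'⟩ := Setup.exists_v_eq_coe (S := S) hc
  obtain ⟨rfl, ha, hb⟩ := H.unique (R.isNPFace
    (mul_ne_zero (pow_ne_zero _ X_ne_zero) (edgeFactor_ne_zero hθ0)) hθ hγ')
  rw [natTrailingDegree_X_pow_mul_edgeFactor hθ0] at ha
  rw [← ha] at R hb
  have hscale : algebraMap K Kbar π ^ q₁ * θ ^ a ≠ 0 :=
    mul_ne_zero (zpow_ne_zero _ hπ0) (pow_ne_zero _ hθ0)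
  have hv : S.v c = S.v (algebraMap K Kbar π ^ q₁ * θ ^ a) := by
    rw [hγ', S.v_mul, Setup.v_zpow_eq_coe hπ, Setup.v_pow_eq_coe hθ, ← WithTop.coe_add, hq]
    congr 1
    ring
  refine ⟨_, red_div_ne_zero hscale hv, expand_redEdge hπ hθ hpow ?_ ?_⟩
  · rw [mul_left_comm]
    exact R.rescale hscale hv
  · rw [hb, natDegree_C_mul (red_div_ne_zero hscale hv),
      natDegree_mul (pow_ne_zero _ X_ne_zero) (edgeFactor_ne_zero hθ0), natDegree_X_pow,
      Nat.add_sub_cancel_left]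

end EdgeReduction

section NearRoots

/-- The roots of `f` that are closer to `r₀` than `0` is; for a root `r₀ ≠ 0` these are the roots
`r` such that `r / r₀` reduces to `1`. -/
noncomputable def nearRoots (S : Setup K Kbar) (f : K[X]) (r₀ : Kbar) : Finset Kbar :=
  {r ∈ rootFinset f | S.v r₀ < S.v (r - r₀)}

variable {S : Setup K Kbar} {π : K} {f : K[X]} {θ r₀ : Kbar} {ρ γ : ℚ} {a b p : ℕ} {q₁ : ℤ}

theorem nearRoots_eq_filter_red (hθ : θ ≠ 0) (h : S.v r₀ = S.v θ) :
    nearRoots S f r₀ = {r ∈ {r ∈ (rootFinset f : Finset Kbar) | S.v r = S.v θ} |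
      red S (r / θ) = red S (r₀ / θ)} := by
  rw [nearRoots, Finset.filter_filter]
  refine Finset.filter_congr fun r _ => ?_
  have hred (hr : S.v r = S.v θ) :
      red S (r / θ) = red S (r₀ / θ) ↔ S.v r₀ < S.v (r - r₀) := by
    rw [red_eq_red_iff ((Setup.v_div_nonneg_iff hθ).mpr hr.ge)
      ((Setup.v_div_nonneg_iff hθ).mpr h.ge), ← sub_div, Setup.v_div_pos_iff hθ, h]
  exact ⟨fun hlt => have hr := (Setup.v_eq_of_lt_v_sub hlt).trans h; ⟨hr, (hred hr).mpr hlt⟩,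
    fun hr => (hred hr.1).mp hr.2⟩

theorem rootMultiplicity_C_mul_edgeFactor_le_iff (hθ : θ ≠ 0) {e : Residue S} (he : e ≠ 0)
    (N : ℕ) : (∀ w, (C e * edgeFactor S f θ).rootMultiplicity w ≤ N) ↔
      ∀ r₀ ∈ rootFinset f, S.v r₀ = S.v θ → (nearRoots S f r₀).card ≤ N := by
  simp only [edgeFactor, rootMultiplicity_C_mul_prod_X_sub_C _ _ he]
  refine ⟨fun H r₀ _ h => nearRoots_eq_filter_red hθ h ▸ H _, fun H w => ?_⟩
  obtain hw | ⟨r₀, hr₀⟩ := Finset.eq_empty_or_nonempty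
    {r ∈ {r ∈ (rootFinset f : Finset Kbar) | S.v r = S.v θ} | red S (r / θ) = w}
  · simp [hw]
  · obtain ⟨hmem, rfl⟩ := Finset.mem_filter.mp hr₀
    obtain ⟨hroot, h⟩ := Finset.mem_filter.mp hmem
    exact nearRoots_eq_filter_red hθ h ▸ H r₀ hroot h

theorem IsNPFace.separable_redEdge_iff (H : IsNPFace S f ρ γ a b) (hsep : f.Separable)
    (hπ : S.vK π = ((1 : ℚ) : WithTop ℚ)) (hp : p.Prime)
    (hres : ((0 : ℚ) : WithTop ℚ) < S.vK (p : K)) (hq : (q₁ : ℚ) = γ + a * ρ) :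
    (redEdge S π f a b q₁ ρ.num ρ.den).Separable ↔ ∀ r₀ ∈ rootFinset (Kbar := Kbar) f,
      S.v r₀ = (-ρ : ℚ) → (nearRoots S f r₀).card ≤ ordProj[p] ρ.den := by
  obtain ⟨θ, hpow, hθ⟩ := exists_pow_den_eq_zpow hπ ρ
  have hθ0 : θ ≠ 0 := Setup.ne_zero_of_v_eq_coe hθ
  obtain ⟨e, he, hexp⟩ := H.exists_expand_redEdge_eq hsep hπ hθ hpow hq
  have := charP_residue (S := S) hp hres
  have := ExpChar.prime (R := Residue S) hp
  have hm : ((ordCompl[p] ρ.den : ℕ) : Residue S) ≠ 0 := by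
    rw [Ne, CharP.cast_eq_zero_iff _ p]
    exact Nat.not_dvd_ordCompl hp ρ.den_nz
  have hcoeff : (redEdge S π f a b q₁ ρ.num ρ.den).coeff 0 ≠ 0 := by
    have h := congrArg (coeff · 0) hexp
    simp only [coeff_expand ρ.den_pos, dvd_zero, if_true, Nat.zero_div, coeff_C_mul] at h
    exact h ▸ mul_ne_zero he (coeff_zero_edgeFactor_ne_zero hθ0)
  have hsplits : (expand _ (ordProj[p] ρ.den * ordCompl[p] ρ.den)
      (redEdge S π f a b q₁ ρ.num ρ.den)).Splits := by
    rw [Nat.ordProj_mul_ordCompl_eq_self, hexp]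
    exact (Splits.C e).mul (Splits.prod fun r _ => Splits.X_sub_C _)
  rw [separable_iff_forall_rootMultiplicity_expand_le p hm hcoeff hsplits,
    Nat.ordProj_mul_ordCompl_eq_self, hexp, rootMultiplicity_C_mul_edgeFactor_le_iff hθ0 he, hθ]

end NearRoots

section Clusters

variable {S : Setup K Kbar} {π : K} {f : K[X]} {s : Finset Kbar} {r₀ : Kbar} {p : ℕ} {lam : ℚ}

theorem npRegular_iff_card_nearRoots_le (hπ : S.vK π = ((1 : ℚ) : WithTop ℚ)) (hp : p.Prime)
    (hres : ((0 : ℚ) : WithTop ℚ) < S.vK (p : K)) (hsep : f.Separable) (h0 : f.coeff 0 ≠ 0) :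
    NPRegular S π f ↔ ∀ r₀ ∈ rootFinset (Kbar := Kbar) f, ∀ lam : ℚ, S.v r₀ = lam →
      (nearRoots S f r₀).card ≤ ordProj[p] lam.den := by
  have hedge {s : ℕ} {i : Fin (s + 1) → ℕ} {c : Fin (s + 1) → ℚ} (hNP : IsNPVertices S f s i c)
      (j : Fin s) {q₁ : ℤ} (hq : (q₁ : ℚ) = c j.castSucc) :=
    (hNP.isNPFace j).separable_redEdge_iff hsep hπ hp hres (hq.trans (sub_add_cancel _ _).symm)
  refine ⟨fun hreg r₀ hr₀ lam hlam => ?_, fun hle s i c hNP j q₁ nρ n hq hn hnρ => ?_⟩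
  · obtain ⟨s, i, c, hNP, hslope⟩ := exists_isNPVertices S hsep h0
    obtain ⟨j, hj⟩ := hslope r₀ hr₀ lam hlam
    obtain ⟨q₁, hq₁⟩ := S.v_base_int _ (Setup.ne_zero_of_vK_eq_coe (hNP.vert j.castSucc))
    have hq : (q₁ : ℚ) = c j.castSucc := by
      exact_mod_cast hq₁.symm.trans (hNP.vert j.castSucc)
    have hcard := (hedge hNP j hq).mp
      (hreg s i c hNP j q₁ _ _ hq rfl (Rat.den_mul_eq_num _).symm) r₀ hr₀
      (by rw [hlam, hj, neg_neg])
    rwa [hj, Rat.neg_den] at hcard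
  · obtain rfl : nρ = (NPslope i c j).num := by
      exact_mod_cast hnρ.trans (hn ▸ Rat.den_mul_eq_num _)
    rw [hn, hedge hNP j hq]
    exact fun r₀ hr₀ hv => Rat.neg_den (NPslope i c j) ▸ hle r₀ hr₀ _ hv

theorem IsCluster.subset_rootFinset (hs : IsCluster S f s) : s ⊆ rootFinset f := by
  obtain ⟨-, z, δ, rfl⟩ := hs
  exact Finset.filter_subset _ _

theorem depth_le_v_sub {r r' : Kbar} (hr : r ∈ s) (hr' : r' ∈ s) : depth S s ≤ S.v (r - r') :=
  (Finset.inf_le hr).trans (Finset.inf_le hr')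

theorem dmin_zero_le_depth : dmin S s 0 ≤ depth S s := by
  have hle : ∀ r ∈ s, dmin S s 0 ≤ S.v r := fun r hr =>
    (Finset.inf_le hr).trans_eq (congrArg S.v (sub_zero r))
  exact Finset.le_inf fun r hr => Finset.le_inf fun r' hr' =>
    (le_min (hle r hr) (hle r' hr')).trans (S.addValuation.map_sub r r')

theorem IsCluster.exists_subset_nearRoots (hs : IsCluster S f s) (hlam : dmin S s 0 = lam)
    (hdepth : depth S s ≠ lam) : ∃ r₀ ∈ s, S.v r₀ = lam ∧ s ⊆ nearRoots S f r₀ := by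
  obtain ⟨r₀, hr₀, hmin⟩ := s.exists_mem_eq_inf hs.1 fun r => S.v (r - 0)
  have hv : S.v r₀ = lam := by rw [← hlam, dmin, hmin, sub_zero]
  have hlt : S.v r₀ < depth S s := hv ▸ (hlam ▸ dmin_zero_le_depth).lt_of_ne' hdepth
  exact ⟨r₀, hr₀, hv, fun r hr => Finset.mem_filter.mpr
    ⟨hs.subset_rootFinset hr, hlt.trans_le (depth_le_v_sub hr hr₀)⟩⟩

theorem self_mem_nearRoots (h0 : r₀ ≠ 0) (hr₀ : r₀ ∈ rootFinset f) : r₀ ∈ nearRoots S f r₀ := by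
  rw [nearRoots, Finset.mem_filter, sub_self, S.v_zero, lt_top_iff_ne_top]
  exact ⟨hr₀, Setup.v_ne_top h0⟩

theorem dmin_nearRoots_zero (h0 : r₀ ≠ 0) (hr₀ : r₀ ∈ rootFinset f) :
    dmin S (nearRoots S f r₀) 0 = S.v r₀ := by
  have hv : ∀ r ∈ nearRoots S f r₀, S.v (r - 0) = S.v r₀ := fun r hr => by
    rw [sub_zero, Setup.v_eq_of_lt_v_sub (Finset.mem_filter.mp hr).2]
  have hself := self_mem_nearRoots (S := S) h0 hr₀
  exact ((Finset.inf_le hself).trans_eq (hv _ hself)).antisymm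
    (Finset.le_inf fun r hr => (hv r hr).ge)

theorem v_lt_depth_nearRoots (h0 : r₀ ≠ 0) : S.v r₀ < depth S (nearRoots S f r₀) := by
  have htop : S.v r₀ < ⊤ := lt_top_iff_ne_top.mpr (Setup.v_ne_top h0)
  refine (Finset.lt_inf_iff htop).mpr fun r hr => (Finset.lt_inf_iff htop).mpr fun r' hr' => ?_
  calc S.v r₀ < min (S.v (r - r₀)) (S.v (r' - r₀)) :=
        lt_min (Finset.mem_filter.mp hr).2 (Finset.mem_filter.mp hr').2
    _ ≤ S.v (r - r₀ - (r' - r₀)) := S.addValuation.map_sub _ _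
    _ = S.v (r - r') := by rw [sub_sub_sub_cancel_right]

theorem isCluster_nearRoots (hcard : 1 < (nearRoots S f r₀).card) :
    IsCluster S f (nearRoots S f r₀) := by
  obtain ⟨r, hr, hne⟩ := Finset.exists_mem_ne hcard r₀
  obtain ⟨r₁, hr₁, hmin⟩ := (nearRoots S f r₀).exists_mem_eq_inf ⟨r, hr⟩ fun r => S.v (r - r₀)
  have hne₁ : r₁ - r₀ ≠ 0 := fun h => by
    rw [h, S.v_zero, Finset.inf_eq_top_iff] at hmin
    exact Setup.v_ne_top (sub_ne_zero.mpr hne) (hmin r hr)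
  obtain ⟨δ, hδ⟩ := Setup.exists_v_eq_coe (S := S) hne₁
  refine ⟨⟨r, hr⟩, r₀, δ, Finset.filter_congr fun r hr => ⟨fun hlt => ?_, fun hle => ?_⟩⟩
  · exact (hδ.symm.trans hmin.symm).trans_le (Finset.inf_le (Finset.mem_filter.mpr ⟨hr, hlt⟩))
  · exact (Finset.mem_filter.mp hr₁).2.trans_le (hδ.trans_le hle)

end Clusters

/-- **NP-regularity via clusters.** Suppose `f(0) ≠ 0` and set `λ_s = min_{r ∈ s} v(r)` for a
cluster `s`. Then `f` is NP-regular iff every proper cluster `s ∈ Σ_f` with `|s| > |λ_s|_p`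
satisfies `d_s = λ_s`. -/
theorem npRegular_iff_clusters
    (S : Setup K Kbar) (π : K) (hπ : S.vK π = ((1 : ℚ) : WithTop ℚ))
    (p : ℕ) (hp : p.Prime) (hres : ((0 : ℚ) : WithTop ℚ) < S.vK (p : K))
    (f : K[X]) (hsep : f.Separable) (hdeg : 1 ≤ f.natDegree) (h0 : f.coeff 0 ≠ 0) :
    NPRegular S π f ↔
      ∀ s : Finset Kbar, IsCluster S f s → 1 < s.card →
        ∀ lam : ℚ, dmin S s 0 = ((lam : ℚ) : WithTop ℚ) →
          padicNorm p lam < (s.card : ℚ) → depth S s = ((lam : ℚ) : WithTop ℚ) := by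
  have : Fact p.Prime := ⟨hp⟩
  rw [npRegular_iff_card_nearRoots_le hπ hp hres hsep h0]
  constructor
  · intro hle s hs hcard lam hlam hlt
    by_contra hdepth
    obtain ⟨r₀, hr₀, hv, hsub⟩ := hs.exists_subset_nearRoots hlam hdepth
    have hs_le : s.card ≤ ordProj[p] lam.den :=
      (Finset.card_le_card hsub).trans (hle r₀ (hs.subset_rootFinset hr₀) lam hv)
    exact hs_le.not_gt ((padicNorm_lt_natCast_iff p lam hcard).mp hlt)
  · intro hdepth r₀ hr₀ lam hv
    have hr₀0 : r₀ ≠ 0 := Setup.ne_zero_of_v_eq_coe hv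
    by_contra! hlt
    have hcard : 1 < (nearRoots S f r₀).card :=
      (Nat.succ_le_of_lt (Nat.ordProj_pos _ _)).trans_lt hlt
    have hd := hdepth _ (isCluster_nearRoots hcard) hcard lam
      ((dmin_nearRoots_zero hr₀0 hr₀).trans hv) ((padicNorm_lt_natCast_iff p lam hcard).mpr hlt)
    exact (v_lt_depth_nearRoots hr₀0).ne' (hd.trans hv.symm)

end ClusterPicture
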